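/- Let A be a unital C*-algebra with unitary group U(A), B a complex Banach algebra, s a fixed nonzero complex number with |s| < 1, r > 2 a real number, and θ ≥ 0. Suppose f : A³ → B satisfies f(x, 0, a) = f(0, z, a) = f(x, z, 0) = 0 for all x, z, a ∈ A and, for all λ, μ, η ∈ T¹ and all x, y, z, w, a, b ∈ A, ‖f(λ(x+y), μ(z−w), η(a+b)) + f(λ(x−y), μ(z+w), η(a−b)) − λμη(2f(x,z,a) − 2f(x,w,b) + 2f(y,z,b) − 2f(y,w,a))‖ ≤ ‖s · D₂f(x, y, z, w, a, b)‖ + θ(‖x‖^r + ‖y‖^r)(‖z‖^r + ‖w‖^r)(‖a‖^r + ‖b‖^r). Then there exists a unique ℂ-trilinear mapping H : A³ → B such that ‖f(x, z, a) − H(x, z, a)‖ ≤ (2θ/(2^r − 2)) ‖x‖^r ‖z‖^r ‖a‖^r for all x, z, a ∈ A. If, in addition, f satisfies ‖f(x_{σ(1)}, x_{σ(2)}, x_{σ(3)}) − f(x₁, x₂, x₃)‖ ≤ θ ‖x₁‖^r ‖x₂‖^r ‖x₃‖^r for all x₁, x₂, x₃ ∈ A and every permutation (σ(1), σ(2), σ(3))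 of (1,2,3), and ‖f(uy, zw, ab) − f(u, z, a)f(y, w, b)‖ ≤ θ(1 + ‖y‖^r)(‖z‖^r + ‖w‖^r)(‖a‖^r + ‖b‖^r) for all u ∈ U(A) and all y, z, w, a, b ∈ A, then H is a permuting trihomomorphism. -/

import Mathlib

/-!
The solution is the limit `H x z a = lim 2 ^ n • f (x / 2 ^ n) z a`. Taking `y = x`, `w = b = 0`
in the functional inequality makes the `D₂` term vanish and gives
`‖f (2 x) z a - 2 f x z a‖ ≤ 2 θ ‖x‖ ^ r ‖z‖ ^ r ‖a‖ ^ r`, so the sequence is Cauchy with ratio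
`2 / 2 ^ r < 1`, and summing the geometric series yields the constant `2 θ / (2 ^ r - 2)`.

In the limit the `θ`-term of the functional inequality disappears. As `H (2 x) z a = 2 H x z a`, the
term `D₂ H` equals `D₁ H`, and `‖D₁ H‖ ≤ ‖s‖ ‖D₁ H‖` with `‖s‖ < 1` forces `D₁ H = 0`. Hence the
inequality becomes an equation: each variable satisfies Jensen's equation, and
`H (l x) (m z) (e a) = l m e H x z a` on the unit circle. An additive map that commutes with unit
scalars is `ℂ`-linear, because every complex number is a sum of unimodular ones
(`map_smul_of_circle`).

For any trilinear `H` with the stated bound, `f` may be rescaled by powers of two in any of its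
variables without changing the limit `H` (`tendsto_scaled`). Scaling the first variable alone
gives uniqueness, scaling all three gives symmetry, and scaling the last two variables gives
`H (u y) (z w) (a b) = H u z a * H y w b` for unitary `u`; here the error is of order
`(4 / 2 ^ r) ^ (2 n)`, which is where `r > 2` is used. Since a unital C⋆-algebra is spanned by its
unitaries, the last identity holds for all `u`.
-/


/-- A mapping `f : X³ → Y` is *tri-additive* if it is additive in each variable. -/
def TriAdditive {X Y : Type*} [AddCommGroup X] [AddCommGroup Y]
    (f : X → X → X → Y) : Prop :=
  (∀ x x' z a : X, f (x + x') z a = f x z a + f x' z a) ∧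
  (∀ x z z' a : X, f x (z + z') a = f x z a + f x z' a) ∧
  (∀ x z a a' : X, f x z (a + a') = f x z a + f x z a')

/-- A mapping `f : X³ → Y` is *ℂ-trilinear* if it is ℂ-linear in each variable. -/
def CTrilinear {X Y : Type*} [AddCommGroup X] [Module ℂ X] [AddCommGroup Y] [Module ℂ Y]
    (f : X → X → X → Y) : Prop :=
  TriAdditive f ∧
  (∀ (c : ℂ) (x z a : X), f (c • x) z a = c • f x z a) ∧
  (∀ (c : ℂ) (x z a : X), f x (c • z) a = c • f x z a) ∧
  (∀ (c : ℂ) (x z a : X), f x z (c • a) = c • f x z a)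

/-- `D₁f(x, y, z, w, a, b)`. -/
def D₁ {X Y : Type*} [AddCommGroup X] [Module ℂ X] [AddCommGroup Y] [Module ℂ Y]
    (f : X → X → X → Y) (x y z w a b : X) : Y :=
  f (x + y) (z - w) (a + b) + f (x - y) (z + w) (a - b)
    - (2 : ℂ) • f x z a + (2 : ℂ) • f x w b - (2 : ℂ) • f y z b + (2 : ℂ) • f y w a

/-- `D₂f(x, y, z, w, a, b)`. -/
noncomputable def D₂ {X Y : Type*} [AddCommGroup X] [Module ℂ X] [AddCommGroup Y] [Module ℂ Y]
    (f : X → X → X → Y) (x y z w a b : X) : Y :=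
  (2 : ℂ) • f ((2 : ℂ)⁻¹ • (x + y)) (z - w) (a + b)
    + (2 : ℂ) • f ((2 : ℂ)⁻¹ • (x - y)) (z + w) (a - b)
    - (2 : ℂ) • f x z a + (2 : ℂ) • f x w b - (2 : ℂ) • f y z b + (2 : ℂ) • f y w a


/-- A ℂ-trilinear `H : A³ → B` is a *permuting trihomomorphism* if it is multiplicative
and is invariant under every permutation of its three variables. -/
def PermutingTrihomomorphism {A B : Type*} [Ring A] [Module ℂ A] [Ring B] [Module ℂ B]
    (H : A → A → A → B) : Prop :=
  CTrilinear H ∧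
  (∀ x y z w a b : A, H (x * y) (z * w) (a * b) = H x z a * H y w b) ∧
  (∀ (σ : Equiv.Perm (Fin 3)) (x : Fin 3 → A),
    H (x (σ 0)) (x (σ 1)) (x (σ 2)) = H (x 0) (x 1) (x 2))

open Filter Topology

/-- The exponential scale `2 ^ (-n)` in the argument turns into the scale `(2 ^ r) ^ (-n)`. -/
lemma norm_half_pow_smul_rpow {X : Type*} [NormedAddCommGroup X] [NormedSpace ℂ X] (r : ℝ)
    (n : ℕ) (x : X) :
    ‖((2 : ℂ)⁻¹ ^ n) • x‖ ^ r = (((2 : ℝ) ^ r)⁻¹) ^ n * ‖x‖ ^ r := by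
  rw [norm_smul, norm_pow, norm_inv, Complex.norm_ofNat,
    Real.mul_rpow (by positivity) (norm_nonneg _)]
  congr 1
  rw [← Real.rpow_natCast, ← Real.rpow_natCast, ← Real.inv_rpow (by norm_num),
    ← Real.rpow_mul (by norm_num), ← Real.rpow_mul (by norm_num), mul_comm]

lemma tendsto_of_norm_sub_le_geometric {X : Type*} [SeminormedAddCommGroup X] {g : ℕ → X} {L : X}
    {C q : ℝ} (hq0 : 0 ≤ q) (hq1 : q < 1) (h : ∀ n, ‖g n - L‖ ≤ C * q ^ n) :
    Tendsto g atTop (𝓝 L) := by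
  rw [tendsto_iff_norm_sub_tendsto_zero]
  refine squeeze_zero (fun n => norm_nonneg _) h ?_
  simpa using (tendsto_pow_atTop_nhds_zero_of_lt_one hq0 hq1).const_mul C

/-- For real `t ≥ 0` with `t ≤ N`, write `2 t / N = v + conj v` with `v` on the unit circle; a
general complex number is a unimodular multiple of its absolute value. -/
lemma map_smul_of_circle {X Y : Type*} [AddCommGroup X] [Module ℂ X] [AddCommGroup Y] [Module ℂ Y]
    (g : X →+ Y) (hg : ∀ l : ℂ, ‖l‖ = 1 → ∀ x, g (l • x) = l • g x) (c : ℂ) (x : X) :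
    g (c • x) = c • g x := by
  have real : ∀ t : ℝ, 0 ≤ t → ∀ x, g ((t : ℂ) • x) = (t : ℂ) • g x := by
    intro t ht x
    obtain ⟨N, hN⟩ := exists_nat_gt t
    have hN0 : (0 : ℝ) < N := ht.trans_lt hN
    set q : ℝ := t / N with hq
    have hq0 : 0 ≤ q := by positivity
    have hq1 : q ≤ 1 := (div_le_one hN0).2 hN.le
    set w : ℝ := Real.sqrt (1 - q ^ 2) with hw
    have hw2 : w ^ 2 = 1 - q ^ 2 := Real.sq_sqrt (by nlinarith)
    have n1 : ‖(⟨q, w⟩ : ℂ)‖ = 1 := by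
      rw [Complex.norm_eq_sqrt_sq_add_sq]; simp [hw2]
    have n2 : ‖(⟨q, -w⟩ : ℂ)‖ = 1 := by
      rw [Complex.norm_eq_sqrt_sq_add_sq]; simp [hw2]
    have hsum : (⟨q, w⟩ : ℂ) + ⟨q, -w⟩ = ((2 * q : ℝ) : ℂ) := by
      apply Complex.ext <;> simp; ring
    have key : ∀ x, g (((2 * q : ℝ) : ℂ) • x) = ((2 * q : ℝ) : ℂ) • g x := by
      intro x
      rw [← hsum, add_smul, map_add, hg _ n1, hg _ n2, add_smul]
    have ht2 : (t : ℂ) = (N : ℂ) * ((2 * q : ℝ) : ℂ) * (2 : ℂ)⁻¹ := by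
      have : (N : ℂ) ≠ 0 := by exact_mod_cast hN0.ne'
      rw [hq]; push_cast; field_simp
    have half : g ((2 : ℂ)⁻¹ • x) = (2 : ℂ)⁻¹ • g x := by
      have h : g ((2 : ℂ) • ((2 : ℂ)⁻¹ • x)) = (2 : ℂ) • g ((2 : ℂ)⁻¹ • x) := by
        rw [two_smul, two_smul, map_add]
      rw [smul_smul, mul_inv_cancel₀ two_ne_zero, one_smul] at h
      rw [h, smul_smul, inv_mul_cancel₀ two_ne_zero, one_smul]
    rw [ht2, mul_smul, mul_smul, Nat.cast_smul_eq_nsmul, map_nsmul, key, half, mul_smul, mul_smul,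
      Nat.cast_smul_eq_nsmul]
  rcases eq_or_ne c 0 with rfl | hc
  · simp
  · have hn : (‖c‖ : ℂ) ≠ 0 := by simpa using hc
    have h1 : ‖c / (‖c‖ : ℂ)‖ = 1 := by
      rw [norm_div, Complex.norm_real, norm_norm, div_self (by simpa using hc)]
    have h2 : c = c / (‖c‖ : ℂ) * (‖c‖ : ℂ) := by field_simp
    rw [h2, mul_smul, hg _ h1, real _ (norm_nonneg c), ← mul_smul]

/-- Jensen's equation in symmetric form, for a map vanishing at `0`, implies additivity. -/
lemma additive_of_jensen {X Y : Type*} [AddCommGroup X] [Module ℂ X] [AddCommGroup Y] [Module ℂ Y]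
    (g : X → Y) (h0 : g 0 = 0) (h : ∀ x y, g (x + y) + g (x - y) = (2 : ℂ) • g x) (x y : X) :
    g (x + y) = g x + g y := by
  have hdouble : ∀ x, g (x + x) = (2 : ℂ) • g x := fun x => by simpa [h0] using h x x
  set u : X := (2 : ℂ)⁻¹ • (x + y) with hu
  set v : X := (2 : ℂ)⁻¹ • (x - y) with hv
  have e1 : u + v = x := by rw [hu, hv]; module
  have e2 : u - v = y := by rw [hu, hv]; module
  have e3 : u + u = x + y := by rw [hu]; module
  rw [← e3, hdouble, ← h u v, e1, e2]

/-- Rescaling `f` by powers of two in any of the variables leaves the limit unchanged. -/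
lemma tendsto_scaled {X Y : Type*} [NormedAddCommGroup X] [NormedSpace ℂ X]
    [NormedAddCommGroup Y] [NormedSpace ℂ Y] {r C : ℝ} (hr : 1 < r) {f H : X → X → X → Y}
    (hH : CTrilinear H)
    (hb : ∀ x z a, ‖f x z a - H x z a‖ ≤ C * (‖x‖ ^ r * ‖z‖ ^ r * ‖a‖ ^ r))
    (i j k : ℕ) (hijk : i + j + k ≠ 0) (x z a : X) :
    Tendsto (fun n : ℕ => ((2 : ℂ) ^ ((i + j + k) * n)) •
      f (((2 : ℂ)⁻¹ ^ (i * n)) • x) (((2 : ℂ)⁻¹ ^ (j * n)) • z) (((2 : ℂ)⁻¹ ^ (k * n)) • a))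
      atTop (𝓝 (H x z a)) := by
  obtain ⟨-, h1, h2, h3⟩ := hH
  have hp : (2 : ℝ) < 2 ^ r := by
    simpa using Real.rpow_lt_rpow_of_exponent_lt (x := 2) (by norm_num) hr
  have hq1 : 2 * ((2 : ℝ) ^ r)⁻¹ < 1 := by
    rw [← div_eq_mul_inv, div_lt_one (by positivity)]; exact hp
  refine tendsto_of_norm_sub_le_geometric (C := C * (‖x‖ ^ r * ‖z‖ ^ r * ‖a‖ ^ r))
    (q := (2 * ((2 : ℝ) ^ r)⁻¹) ^ (i + j + k)) (by positivity)
    (pow_lt_one₀ (by positivity) hq1 hijk) fun n => ?_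
  have e : H x z a = ((2 : ℂ) ^ ((i + j + k) * n)) •
      H (((2 : ℂ)⁻¹ ^ (i * n)) • x) (((2 : ℂ)⁻¹ ^ (j * n)) • z) (((2 : ℂ)⁻¹ ^ (k * n)) • a) := by
    rw [h1, h2, h3, smul_smul, smul_smul, smul_smul, mul_assoc, mul_assoc, ← pow_add, ← pow_add,
      show i * n + (j * n + k * n) = (i + j + k) * n by ring, ← mul_pow,
      mul_inv_cancel₀ two_ne_zero, one_pow, one_smul]
  rw [e, ← smul_sub, norm_smul, norm_pow, Complex.norm_ofNat]
  refine (mul_le_mul_of_nonneg_left (hb _ _ _) (by positivity)).trans (le_of_eq ?_)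
  simp only [norm_half_pow_smul_rpow]
  generalize ((2 : ℝ) ^ r)⁻¹ = p
  rw [mul_pow, mul_pow, ← pow_mul, ← pow_mul]
  ring

/-- A bound on `f (2 x) - 2 f x` of order `‖x‖ ^ r`, `r > 1`, makes `2 ^ n • f (x / 2 ^ n)`
converge. -/
lemma exists_limit {X Y : Type*} [NormedAddCommGroup X] [NormedSpace ℂ X]
    [NormedAddCommGroup Y] [NormedSpace ℂ Y] [CompleteSpace Y] {r M : ℝ} (hr : 1 < r)
    (g : X → Y) (hg : ∀ x, ‖g ((2 : ℂ) • x) - (2 : ℂ) • g x‖ ≤ M * ‖x‖ ^ r) (x : X) :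
    ∃ L, Tendsto (fun n : ℕ => ((2 : ℂ) ^ n) • g (((2 : ℂ)⁻¹ ^ n) • x)) atTop (𝓝 L) ∧
      ‖g x - L‖ ≤ M / ((2 : ℝ) ^ r - 2) * ‖x‖ ^ r := by
  have hp : (2 : ℝ) < 2 ^ r := by
    simpa using Real.rpow_lt_rpow_of_exponent_lt (x := 2) (by norm_num) hr
  have hq1 : 2 * ((2 : ℝ) ^ r)⁻¹ < 1 := by
    rw [← div_eq_mul_inv, div_lt_one (by positivity)]; exact hp
  have hstep : ∀ n : ℕ, dist (((2 : ℂ) ^ n) • g (((2 : ℂ)⁻¹ ^ n) • x))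
      (((2 : ℂ) ^ (n + 1)) • g (((2 : ℂ)⁻¹ ^ (n + 1)) • x)) ≤
      (M * ((2 : ℝ) ^ r)⁻¹ * ‖x‖ ^ r) * (2 * ((2 : ℝ) ^ r)⁻¹) ^ n := by
    intro n
    have h := hg (((2 : ℂ)⁻¹ ^ (n + 1)) • x)
    have e : (2 : ℂ) • (((2 : ℂ)⁻¹ ^ (n + 1)) • x) = ((2 : ℂ)⁻¹ ^ n) • x := by
      rw [smul_smul, pow_succ', ← mul_assoc, mul_inv_cancel₀ two_ne_zero, one_mul]
    rw [e, norm_half_pow_smul_rpow] at h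
    rw [dist_eq_norm, pow_succ (2 : ℂ), mul_smul, ← smul_sub, norm_smul, norm_pow,
      Complex.norm_ofNat]
    refine (mul_le_mul_of_nonneg_left h (by positivity)).trans (le_of_eq ?_)
    ring
  obtain ⟨L, hL⟩ := cauchySeq_tendsto_of_complete (cauchySeq_of_le_geometric _ _ hq1 hstep)
  refine ⟨L, hL, ?_⟩
  have h := dist_le_of_le_geometric_of_tendsto₀ _ _ hq1 hstep hL
  rw [dist_eq_norm] at h
  simp only [pow_zero, one_smul] at h
  refine h.trans (le_of_eq ?_)
  have : (2 : ℝ) ^ r - 2 ≠ 0 := by linarith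
  have h2 : (2 : ℝ) ^ r ≠ 0 := by positivity
  have h3 : 1 - 2 * ((2 : ℝ) ^ r)⁻¹ ≠ 0 := by linarith
  have h4 : 1 - 2 * ((2 : ℝ) ^ r)⁻¹ = ((2 : ℝ) ^ r - 2) / (2 : ℝ) ^ r := by field_simp
  rw [h4]
  field_simp

/-- The limiting form of the functional inequality, without its `θ`-term, forces trilinearity. -/
lemma trilinear_of_ineq {X Y : Type*} [AddCommGroup X] [Module ℂ X]
    [NormedAddCommGroup Y] [NormedSpace ℂ Y] {s : ℂ} (hs1 : ‖s‖ < 1) (H : X → X → X → Y)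
    (hzero : ∀ x z a : X, H x 0 a = 0 ∧ H 0 z a = 0 ∧ H x z 0 = 0)
    (hhalf : ∀ x z a, (2 : ℂ) • H ((2 : ℂ)⁻¹ • x) z a = H x z a)
    (hineq : ∀ l m e : ℂ, ‖l‖ = 1 → ‖m‖ = 1 → ‖e‖ = 1 → ∀ x y z w a b : X,
      ‖H (l • (x + y)) (m • (z - w)) (e • (a + b))
          + H (l • (x - y)) (m • (z + w)) (e • (a - b))
          - (l * m * e) • ((2 : ℂ) • H x z a - (2 : ℂ) • H x w b
              + (2 : ℂ) • H y z b - (2 : ℂ) • H y w a)‖ ≤ ‖s • D₂ H x y z w a b‖) :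
    CTrilinear H := by
  have hz1 : ∀ z a, H 0 z a = 0 := fun z a => (hzero 0 z a).2.1
  have hz2 : ∀ x a, H x 0 a = 0 := fun x a => (hzero x 0 a).1
  have hz3 : ∀ x z, H x z 0 = 0 := fun x z => (hzero x z 0).2.2
  have hD₂ : ∀ x y z w a b, D₂ H x y z w a b = D₁ H x y z w a b := by
    intro x y z w a b
    simp only [D₂, D₁, hhalf]
  have hD₁ : ∀ x y z w a b, D₁ H x y z w a b = 0 := by
    intro x y z w a b
    have h := hineq 1 1 1 (by simp) (by simp) (by simp) x y z w a b
    rw [hD₂, norm_smul] at h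
    have e : H ((1 : ℂ) • (x + y)) ((1 : ℂ) • (z - w)) ((1 : ℂ) • (a + b))
          + H ((1 : ℂ) • (x - y)) ((1 : ℂ) • (z + w)) ((1 : ℂ) • (a - b))
          - ((1 : ℂ) * 1 * 1) • ((2 : ℂ) • H x z a - (2 : ℂ) • H x w b
              + (2 : ℂ) • H y z b - (2 : ℂ) • H y w a) = D₁ H x y z w a b := by
      simp only [D₁, one_smul, mul_one]; abel
    rw [e] at h
    rw [← norm_le_zero_iff]
    nlinarith [norm_nonneg (D₁ H x y z w a b)]
  have hcirc : ∀ l m e : ℂ, ‖l‖ = 1 → ‖m‖ = 1 → ‖e‖ = 1 → ∀ x z a,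
      H (l • x) (m • z) (e • a) = (l * m * e) • H x z a := by
    intro l m e hl hm he x z a
    have h := hineq l m e hl hm he x 0 z 0 a 0
    rw [hD₂, hD₁, smul_zero, norm_zero, norm_le_zero_iff] at h
    simp only [add_zero, sub_zero, hz1, hz2, smul_zero] at h
    rw [smul_comm _ (2 : ℂ), ← two_smul ℂ, ← smul_sub] at h
    exact sub_eq_zero.1 ((smul_eq_zero_iff_right two_ne_zero).1 h)
  have add1 : ∀ x x' z a, H (x + x') z a = H x z a + H x' z a := fun x x' z a =>
    additive_of_jensen (fun x => H x z a) (hzero 0 z a).2.1 (fun x y => by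
      have h := hD₁ x y z 0 a 0
      simp only [D₁, add_zero, sub_zero, hz2, hz3, smul_zero] at h
      exact sub_eq_zero.1 h) x x'
  have add2 : ∀ x z z' a, H x (z + z') a = H x z a + H x z' a := fun x z z' a =>
    additive_of_jensen (fun z => H x z a) (hzero x 0 a).1 (fun z w => by
      have h := hD₁ x 0 z w a 0
      simp only [D₁, add_zero, sub_zero, hz1, hz3, smul_zero] at h
      rw [add_comm]
      exact sub_eq_zero.1 h) z z'
  have add3 : ∀ x z a a', H x z (a + a') = H x z a + H x z a' := fun x z a a' =>
    additive_of_jensen (fun a => H x z a) (hzero x z 0).2.2 (fun a b => by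
      have h := hD₁ x 0 z 0 a b
      simp only [D₁, add_zero, sub_zero, hz1, hz2, smul_zero] at h
      exact sub_eq_zero.1 h) a a'
  refine ⟨⟨add1, add2, add3⟩, fun c x z a => ?_, fun c x z a => ?_, fun c x z a => ?_⟩
  · exact map_smul_of_circle (AddMonoidHom.mk' (fun x => H x z a) fun x y => add1 x y z a)
      (fun l hl x => by simpa using hcirc l 1 1 hl (by simp) (by simp) x z a) c x
  · exact map_smul_of_circle (AddMonoidHom.mk' (fun z => H x z a) fun z w => add2 x z w a)
      (fun l hl z => by simpa using hcirc 1 l 1 (by simp) hl (by simp) x z a) c z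
  · exact map_smul_of_circle (AddMonoidHom.mk' (fun a => H x z a) fun a b => add3 x z a b)
      (fun l hl a => by simpa using hcirc 1 1 l (by simp) (by simp) hl x z a) c a

variable {A B : Type*} [NormedRing A] [StarRing A] [CStarRing A]
  [NormedAlgebra ℂ A] [StarModule ℂ A] [CompleteSpace A]
  [NormedRing B] [NormedAlgebra ℂ B] [CompleteSpace B]

theorem stmt_19 (s : ℂ) (hs0 : s ≠ 0) (hs1 : ‖s‖ < 1) (r θ : ℝ) (hr : 2 < r) (hθ : 0 ≤ θ)
    (f : A → A → A → B)
    (hzero : ∀ x z a : A, f x 0 a = 0 ∧ f 0 z a = 0 ∧ f x z 0 = 0)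
    (hineq : ∀ l m e : ℂ, ‖l‖ = 1 → ‖m‖ = 1 → ‖e‖ = 1 → ∀ x y z w a b : A,
      ‖f (l • (x + y)) (m • (z - w)) (e • (a + b))
          + f (l • (x - y)) (m • (z + w)) (e • (a - b))
          - (l * m * e) • ((2 : ℂ) • f x z a - (2 : ℂ) • f x w b
              + (2 : ℂ) • f y z b - (2 : ℂ) • f y w a)‖
        ≤ ‖s • D₂ f x y z w a b‖ + θ * (‖x‖ ^ r + ‖y‖ ^ r) * (‖z‖ ^ r + ‖w‖ ^ r) * (‖a‖ ^ r + ‖b‖ ^ r)) :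
    (∃! H : A → A → A → B, CTrilinear H ∧
      ∀ x z a : A, ‖f x z a - H x z a‖ ≤ 2 * θ / ((2 : ℝ) ^ r - 2) * (‖x‖ ^ r * ‖z‖ ^ r * ‖a‖ ^ r)) ∧
    ((∀ (σ : Equiv.Perm (Fin 3)) (x : Fin 3 → A),
      ‖f (x (σ 0)) (x (σ 1)) (x (σ 2)) - f (x 0) (x 1) (x 2)‖
        ≤ θ * ‖x 0‖ ^ r * ‖x 1‖ ^ r * ‖x 2‖ ^ r) →
     (∀ u : A, u ∈ unitary A → ∀ y z w a b : A,
      ‖f (u * y) (z * w) (a * b) - f u z a * f y w b‖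
        ≤ θ * (1 + ‖y‖ ^ r) * (‖z‖ ^ r + ‖w‖ ^ r) * (‖a‖ ^ r + ‖b‖ ^ r)) →
     ∀ H : A → A → A → B,
       (CTrilinear H ∧ ∀ x z a : A, ‖f x z a - H x z a‖ ≤ 2 * θ / ((2 : ℝ) ^ r - 2) * (‖x‖ ^ r * ‖z‖ ^ r * ‖a‖ ^ r)) →
       PermutingTrihomomorphism H) := by
  have hz1 : ∀ z a, f 0 z a = 0 := fun z a => (hzero 0 z a).2.1
  have hz2 : ∀ x a, f x 0 a = 0 := fun x a => (hzero x 0 a).1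
  have hz3 : ∀ x z, f x z 0 = 0 := fun x z => (hzero x z 0).2.2
  have hr0 : r ≠ 0 := by linarith
  have hr1 : 1 < r := by linarith
  have hp : (4 : ℝ) < 2 ^ r := by
    have := Real.rpow_lt_rpow_of_exponent_lt (x := 2) (by norm_num) hr
    rw [Real.rpow_two] at this
    linarith
  have hp0 : (0 : ℝ) < 2 ^ r := by positivity
  have hdouble : ∀ x z a : A, ‖f ((2 : ℂ) • x) z a - (2 : ℂ) • f x z a‖
      ≤ (2 * θ * (‖z‖ ^ r * ‖a‖ ^ r)) * ‖x‖ ^ r := by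
    intro x z a
    have h := hineq 1 1 1 (by simp) (by simp) (by simp) x x z 0 a 0
    have e : (2 : ℂ)⁻¹ • (2 : ℂ) • x = x := by module
    have e' : x + x = (2 : ℂ) • x := by module
    simp only [D₂, e', e, sub_self, smul_zero, hz1, hz2, hz3, add_zero, sub_zero, norm_zero,
      one_smul, mul_one, Real.zero_rpow hr0, zero_add] at h
    refine h.trans (le_of_eq ?_)
    ring
  constructor
  · choose H hlim hbound using fun x z a => exists_limit hr1 (fun x => f x z a)
      (fun x => hdouble x z a) x
    have hHb : ∀ x z a : A,
        ‖f x z a - H x z a‖ ≤ 2 * θ / ((2 : ℝ) ^ r - 2) * (‖x‖ ^ r * ‖z‖ ^ r * ‖a‖ ^ r) :=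
      fun x z a => (hbound x z a).trans (le_of_eq (by ring))
    have hHzero : ∀ x z a : A, H x 0 a = 0 ∧ H 0 z a = 0 ∧ H x z 0 = 0 := fun x z a => by
      refine ⟨tendsto_nhds_unique (hlim x 0 a) ?_, tendsto_nhds_unique (hlim 0 z a) ?_,
        tendsto_nhds_unique (hlim x z 0) ?_⟩ <;> simp [hz1, hz2, hz3]
    have hHhalf : ∀ x z a, (2 : ℂ) • H ((2 : ℂ)⁻¹ • x) z a = H x z a := fun x z a => by
      refine tendsto_nhds_unique ((hlim ((2 : ℂ)⁻¹ • x) z a).const_smul (2 : ℂ)) ?_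
      refine ((hlim x z a).comp (tendsto_add_atTop_nat 1)).congr fun n => ?_
      simp only [Function.comp_apply, pow_succ, smul_smul, mul_comm]
    have hHtri : CTrilinear H := by
      refine trilinear_of_ineq hs1 H hHzero hHhalf fun l m e hl hm he x y z w a b => ?_
      have hL := ((((hlim (l • (x + y)) (m • (z - w)) (e • (a + b))).add
        (hlim (l • (x - y)) (m • (z + w)) (e • (a - b)))).sub
        ((((((hlim x z a).const_smul (2 : ℂ)).sub ((hlim x w b).const_smul (2 : ℂ))).add
          ((hlim y z b).const_smul (2 : ℂ))).sub ((hlim y w a).const_smul (2 : ℂ))).const_smul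
            (l * m * e)))).norm
      have hR := ((((((((hlim ((2 : ℂ)⁻¹ • (x + y)) (z - w) (a + b)).const_smul (2 : ℂ)).add
        ((hlim ((2 : ℂ)⁻¹ • (x - y)) (z + w) (a - b)).const_smul (2 : ℂ))).sub
        ((hlim x z a).const_smul (2 : ℂ))).add ((hlim x w b).const_smul (2 : ℂ))).sub
        ((hlim y z b).const_smul (2 : ℂ))).add ((hlim y w a).const_smul (2 : ℂ))).const_smul
          s).norm
      have hE : Tendsto (fun n : ℕ => θ * (‖x‖ ^ r + ‖y‖ ^ r) * (‖z‖ ^ r + ‖w‖ ^ r) *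
          (‖a‖ ^ r + ‖b‖ ^ r) * (2 * ((2 : ℝ) ^ r)⁻¹) ^ n) atTop (𝓝 0) := by
        have hq1 : 2 * ((2 : ℝ) ^ r)⁻¹ < 1 := by
          rw [← div_eq_mul_inv, div_lt_one (by positivity)]; linarith
        simpa using (tendsto_pow_atTop_nhds_zero_of_lt_one (by positivity) hq1).const_mul
          (θ * (‖x‖ ^ r + ‖y‖ ^ r) * (‖z‖ ^ r + ‖w‖ ^ r) * (‖a‖ ^ r + ‖b‖ ^ r))
      have hRE := hR.add hE
      rw [add_zero] at hRE
      refine le_of_tendsto_of_tendsto' hL hRE fun n => ?_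
      have h := hineq l m e hl hm he (((2 : ℂ)⁻¹ ^ n) • x) (((2 : ℂ)⁻¹ ^ n) • y) z w a b
      have h' := mul_le_mul_of_nonneg_left h (norm_nonneg ((2 : ℂ) ^ n))
      rw [mul_add, ← norm_smul, ← norm_smul] at h'
      simp only [norm_half_pow_smul_rpow, D₂] at h'
      -- the factor `2⁻¹ ^ n` is moved next to the variable it scales
      have e1 : ∀ c : ℂ, c • (((2 : ℂ)⁻¹ ^ n) • x + ((2 : ℂ)⁻¹ ^ n) • y) =
          ((2 : ℂ)⁻¹ ^ n) • c • (x + y) := fun c => by module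
      have e2 : ∀ c : ℂ, c • (((2 : ℂ)⁻¹ ^ n) • x - ((2 : ℂ)⁻¹ ^ n) • y) =
          ((2 : ℂ)⁻¹ ^ n) • c • (x - y) := fun c => by module
      simp only [e1, e2] at h'
      refine (le_of_eq ?_).trans (h'.trans (le_of_eq ?_))
      · congr 1
        module
      · congr 1
        · congr 1
          module
        · rw [norm_pow, Complex.norm_ofNat, mul_pow]
          ring
    refine ⟨H, ⟨hHtri, hHb⟩, ?_⟩
    rintro H' ⟨hH't, hH'b⟩
    funext x z a
    have h := tendsto_scaled hr1 hH't hH'b 1 0 0 (by norm_num) x z a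
    refine tendsto_nhds_unique h ?_
    simpa using hlim x z a
  · rintro hsym hmul H ⟨hHt, hHb⟩
    refine ⟨hHt, ?_, ?_⟩
    · have hunit : ∀ u : A, u ∈ unitary A → ∀ y z w a b : A,
          H (u * y) (z * w) (a * b) = H u z a * H y w b := by
        intro u hu y z w a b
        have t1 := tendsto_scaled hr1 hHt hHb 0 2 2 (by norm_num) (u * y) (z * w) (a * b)
        have t2 := (tendsto_scaled hr1 hHt hHb 0 1 1 (by norm_num) u z a).mul
          (tendsto_scaled hr1 hHt hHb 0 1 1 (by norm_num) y w b)
        have t3 := t1.sub t2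
        rw [← sub_eq_zero]
        refine tendsto_nhds_unique t3 ?_
        refine tendsto_of_norm_sub_le_geometric
          (C := θ * (1 + ‖y‖ ^ r) * (‖z‖ ^ r + ‖w‖ ^ r) * (‖a‖ ^ r + ‖b‖ ^ r))
          (q := (4 * ((2 : ℝ) ^ r)⁻¹) ^ 2) (by positivity)
          (pow_lt_one₀ (by positivity) (by
            rw [← div_eq_mul_inv, div_lt_one (by positivity)]; exact hp) two_ne_zero) fun n => ?_
        have h := hmul u hu y (((2 : ℂ)⁻¹ ^ n) • z) (((2 : ℂ)⁻¹ ^ n) • w)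
          (((2 : ℂ)⁻¹ ^ n) • a) (((2 : ℂ)⁻¹ ^ n) • b)
        have h' := mul_le_mul_of_nonneg_left h (norm_nonneg ((2 : ℂ) ^ (4 * n)))
        rw [← norm_smul] at h'
        simp only [norm_half_pow_smul_rpow] at h'
        refine (le_of_eq ?_).trans (h'.trans (le_of_eq ?_))
        · simp only [smul_mul_smul_comm, sub_zero, ← pow_add, zero_add, zero_mul, pow_zero,
            one_smul, one_mul, smul_sub]
          simp only [show (2 + 2) * n = 4 * n by ring, show 2 * n = n + n by ring,
            show n + n + (n + n) = 4 * n by ring]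
        · rw [norm_pow, Complex.norm_ofNat]
          generalize ((2 : ℝ) ^ r)⁻¹ = p
          have h16 : (2 : ℝ) ^ (4 * n) = (4 ^ 2) ^ n := by
            rw [pow_mul]; norm_num
          rw [h16, mul_pow 4 p, mul_pow, ← pow_mul p]
          ring
      obtain ⟨⟨hadd, -, -⟩, hsmul, -, -⟩ := hHt
      let _ : CStarAlgebra A := { }
      intro x y z w a b
      have hx : x ∈ Submodule.span ℂ (unitary A : Set A) := by
        rw [CStarAlgebra.span_unitary]; trivial
      induction hx using Submodule.span_induction with
      | mem u hu => exact hunit u hu y z w a b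
      | zero =>
        have h0 : ∀ z a, H 0 z a = 0 := fun z a => by simpa using hsmul 0 0 z a
        rw [zero_mul, h0, h0, zero_mul]
      | add u v _ _ hu hv => rw [add_mul, hadd, hadd, hu, hv, add_mul]
      | smul c u _ hu => rw [smul_mul_assoc, hsmul, hsmul, hu, smul_mul_assoc]
    · intro σ x
      have t := (tendsto_scaled hr1 hHt hHb 1 1 1 (by norm_num) (x (σ 0)) (x (σ 1)) (x (σ 2))).sub
        (tendsto_scaled hr1 hHt hHb 1 1 1 (by norm_num) (x 0) (x 1) (x 2))
      rw [← sub_eq_zero]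
      refine tendsto_nhds_unique t ?_
      refine tendsto_of_norm_sub_le_geometric (C := θ * ‖x 0‖ ^ r * ‖x 1‖ ^ r * ‖x 2‖ ^ r)
        (q := (2 * ((2 : ℝ) ^ r)⁻¹) ^ 3) (by positivity)
        (pow_lt_one₀ (by positivity) (by
          rw [← div_eq_mul_inv, div_lt_one (by positivity)]; linarith) three_ne_zero) fun n => ?_
      have h := hsym σ (fun i => ((2 : ℂ)⁻¹ ^ n) • x i)
      have h' := mul_le_mul_of_nonneg_left h (norm_nonneg ((2 : ℂ) ^ (3 * n)))
      rw [← norm_smul] at h'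
      simp only [norm_half_pow_smul_rpow] at h'
      refine (le_of_eq ?_).trans (h'.trans (le_of_eq ?_))
      · simp only [sub_zero, one_mul, smul_sub, show 1 + 1 + 1 = 3 from rfl]
      · rw [norm_pow, Complex.norm_ofNat, mul_pow, mul_pow, ← pow_mul, ← pow_mul]
        ring
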